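/- arXiv:1607.05992 — 5 statements merged into one kernel-verified Lean document; each statement's English description precedes it below -/
import Mathlib

section
/- Let h : ℝ → ℝ be a C³ function. Then for every t ∈ ℝ, the derivative of the function t ↦ h(t)² (1 − h'(t)² + h(t) h''(t)) equals h(t) · ( h(t)² h'''(t) + h'(t) (2 + h(t) h''(t)) − 2 h'(t)³ ). In particular, if h satisfies the ODE h² h''' + h' (2 + h h'') − 2 h'³ = 0 on an interval, then h² (1 − h'² + h h'') is constant on that interval. -/
/-- The left-hand side `h² h''' + h'(2 + h h'') − 2 h'³` of the warping ODE, as a polynomial in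
the values `y₀, y₁, y₂, y₃` of `h, h', h'', h'''` at a point. -/
def warpingODE {R : Type*} [CommRing R] (y₀ y₁ y₂ y₃ : R) : R :=
  y₀ ^ 2 * y₃ + y₁ * (2 + y₀ * y₂) - 2 * y₁ ^ 3

/-- The prime integral `h²(1 − h'² + h h'')` of the warping ODE, obtained with `h` as integrating
factor, as a polynomial in the values `y₀, y₁, y₂` of `h, h', h''` at a point. -/
def warpingIntegral {R : Type*} [CommRing R] (y₀ y₁ y₂ : R) : R :=
  y₀ ^ 2 * (1 - y₁ ^ 2 + y₀ * y₂)

theorem hasDerivWithinAt_warpingIntegral {𝕜 𝔸 : Type*} [NontriviallyNormedField 𝕜]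
    [NormedCommRing 𝔸] [NormedAlgebra 𝕜 𝔸] {h h₁ h₂ : 𝕜 → 𝔸} {y₃ : 𝔸} {s : Set 𝕜} {t : 𝕜}
    (hh : HasDerivWithinAt h (h₁ t) s t) (hh₁ : HasDerivWithinAt h₁ (h₂ t) s t)
    (hh₂ : HasDerivWithinAt h₂ y₃ s t) :
    HasDerivWithinAt (fun u ↦ warpingIntegral (h u) (h₁ u) (h₂ u))
      (h t * warpingODE (h t) (h₁ t) (h₂ t) y₃) s t := by
  refine ((hh.fun_pow 2).fun_mul
    (((hh₁.fun_pow 2).const_sub 1).fun_add (hh.fun_mul hh₂))).congr_deriv ?_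
  rw [warpingODE]
  push_cast
  ring

theorem eq_of_hasDerivWithinAt_zero {𝕜 F : Type*} [RCLike 𝕜] [NormedAddCommGroup F]
    [NormedSpace 𝕜 F] {f : 𝕜 → F} {s : Set 𝕜} (hs : Convex ℝ s)
    (hf : ∀ x ∈ s, HasDerivWithinAt f 0 s x) {x y : 𝕜} (hx : x ∈ s) (hy : y ∈ s) :
    f x = f y := by
  have norm_sub_bound : ‖f x - f y‖ ≤ 0 * ‖x - y‖ :=
    hs.norm_image_sub_le_of_norm_hasDerivWithin_le hf (fun _ _ ↦ norm_zero.le) hy hx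
  rwa [zero_mul, norm_le_zero_iff, sub_eq_zero] at norm_sub_bound

theorem hasDerivAt_iterate_deriv {𝕜 F : Type*} [NontriviallyNormedField 𝕜]
    [NormedAddCommGroup F] [NormedSpace 𝕜 F] {f : 𝕜 → F} {n : WithTop ℕ∞}
    (hf : ContDiff 𝕜 n f) {k : ℕ} (hk : k < n) (t : 𝕜) :
    HasDerivAt (deriv^[k] f) (deriv^[k + 1] f t) t := by
  rw [Function.iterate_succ_apply', ← iteratedDeriv_eq_iterate]
  exact (hf.differentiable_iteratedDeriv k hk t).hasDerivAt

theorem statement3_general {𝕜 𝔸 : Type*} [RCLike 𝕜] [NormedCommRing 𝔸] [NormedAlgebra 𝕜 𝔸]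
    {h h₁ h₂ h₃ : 𝕜 → 𝔸} {s : Set 𝕜}
    (hh : ∀ t ∈ s, HasDerivWithinAt h (h₁ t) s t)
    (hh₁ : ∀ t ∈ s, HasDerivWithinAt h₁ (h₂ t) s t)
    (hh₂ : ∀ t ∈ s, HasDerivWithinAt h₂ (h₃ t) s t) :
    (∀ t ∈ s, HasDerivWithinAt (fun u ↦ warpingIntegral (h u) (h₁ u) (h₂ u))
      (h t * warpingODE (h t) (h₁ t) (h₂ t) (h₃ t)) s t)
    ∧ (Convex ℝ s → (∀ t ∈ s, warpingODE (h t) (h₁ t) (h₂ t) (h₃ t) = 0) →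
        ∀ t ∈ s, ∀ u ∈ s,
          warpingIntegral (h t) (h₁ t) (h₂ t) = warpingIntegral (h u) (h₁ u) (h₂ u)) := by
  have hasDeriv (t : 𝕜) (ht : t ∈ s) :=
    hasDerivWithinAt_warpingIntegral (hh t ht) (hh₁ t ht) (hh₂ t ht)
  refine ⟨hasDeriv, fun hs ode t ht u hu ↦ ?_⟩
  refine eq_of_hasDerivWithinAt_zero (f := fun v ↦ warpingIntegral (h v) (h₁ v) (h₂ v)) hs
    (fun v hv ↦ (hasDeriv v hv).congr_deriv ?_) ht hu
  rw [ode v hv, mul_zero]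

/-- `h²(1 − h'² + h h'')` is a prime integral of the ODE
`h² h''' + h'(2 + h h'') − 2 h'³ = 0`. -/
theorem statement3 (h : ℝ → ℝ) (hh : ContDiff ℝ 3 h) :
    (∀ t : ℝ,
      HasDerivAt (fun u => (h u)^2 * (1 - (deriv h u)^2 + h u * deriv (deriv h) u))
        (h t * ((h t)^2 * deriv (deriv (deriv h)) t
          + deriv h t * (2 + h t * deriv (deriv h) t) - 2 * (deriv h t)^3)) t)
    ∧ ∀ s : Set ℝ, s.OrdConnected →
        (∀ t ∈ s, (h t)^2 * deriv (deriv (deriv h)) t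
          + deriv h t * (2 + h t * deriv (deriv h) t) - 2 * (deriv h t)^3 = 0) →
        ∀ t ∈ s, ∀ u ∈ s,
          (h t)^2 * (1 - (deriv h t)^2 + h t * deriv (deriv h) t)
            = (h u)^2 * (1 - (deriv h u)^2 + h u * deriv (deriv h) u) := by
  have general (s : Set ℝ) := statement3_general (s := s)
    (fun t _ ↦ (hasDerivAt_iterate_deriv hh (k := 0) (by norm_num) t).hasDerivWithinAt)
    (fun t _ ↦ (hasDerivAt_iterate_deriv hh (k := 1) (by norm_num) t).hasDerivWithinAt)
    (fun t _ ↦ (hasDerivAt_iterate_deriv hh (k := 2) (by norm_num) t).hasDerivWithinAt)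
  exact ⟨fun t ↦ hasDerivWithinAt_univ.mp ((general Set.univ).1 t (Set.mem_univ t)),
    fun s hs ↦ (general s).2 hs.convex⟩
end

section
/- Let h : [0, ∞) → ℝ be a smooth function with h(0) = 0, h'(0) = 1 and h(t) > 0 for all t > 0, and suppose h satisfies the ODE h(t)² h'''(t) + h'(t)(2 + h(t) h''(t)) − 2 h'(t)³ = 0 for all t > 0. Then 1 − h'(t)² + h(t) h''(t) = 0 for all t > 0. -/
/-! The derivative of `h² (1 - h'² + h h'')` is `h` times the left-hand side of the equation, so
this product is constant, and a zero of `h` forces the constant to be `0`. Hence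
`G = 1 - h'² + h h''` vanishes wherever `h` does not. At a zero of `h` the equation reduces to
`h' (1 - h'²) = 0`, while `G = 1 - h'²`, so `G` is `0` or `1` there. Being continuous on an
interval, `G` is constant; it vanishes at the given zero of `h`, where `h' = 1` by assumption. -/

open Set Topology

theorem hasDerivAt_sq_mul_one_sub_sq_add_mul {𝕜 : Type*} [NontriviallyNormedField 𝕜]
    {f f' f'' : 𝕜 → 𝕜} {c t : 𝕜} (hf : HasDerivAt f (f' t) t)
    (hf' : HasDerivAt f' (f'' t) t) (hf'' : HasDerivAt f'' c t) :
    HasDerivAt (fun x ↦ f x ^ 2 * (1 - f' x ^ 2 + f x * f'' x))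
      (f t * (f t ^ 2 * c + f' t * (2 + f t * f'' t) - 2 * f' t ^ 3)) t := by
  refine ((hf.fun_pow 2).fun_mul
    (((hf'.fun_pow 2).const_sub 1).fun_add (hf.fun_mul hf''))).congr_deriv ?_
  push_cast
  ring

theorem eq_of_deriv_eq_zero_on_interior {s : Set ℝ} (hs : Convex ℝ s) {f : ℝ → ℝ}
    (hf : ContinuousOn f s) (hf' : ∀ x ∈ interior s, HasDerivAt f 0 x) {x y : ℝ}
    (hx : x ∈ s) (hy : y ∈ s) : f x = f y := by
  wlog hxy : x ≤ y generalizing x y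
  · exact (this hy hx (le_of_not_ge hxy)).symm
  have hdiff : DifferentiableOn ℝ f (interior s) := fun z hz ↦
    (hf' z hz).differentiableAt.differentiableWithinAt
  have hmono : MonotoneOn f s :=
    monotoneOn_of_deriv_nonneg hs hf hdiff fun z hz ↦ (hf' z hz).deriv.ge
  have hanti : AntitoneOn f s :=
    antitoneOn_of_deriv_nonpos hs hf hdiff fun z hz ↦ (hf' z hz).deriv.le
  exact (hmono hx hy hxy).antisymm (hanti hx hy hxy)

/-- The function `1 - h'² + h h''` on `s`: up to the factor `h²`, the difference between the
tangential and radial sectional curvatures `(1 - h'²) / h²` and `-h'' / h` of the warped metric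
`dt² + h(t)² g`, where `g` is the metric of the unit sphere. Derivatives are taken within `s`,
so that the value at an endpoint is not junk. -/
noncomputable def curvatureDefect (s : Set ℝ) (h : ℝ → ℝ) (t : ℝ) : ℝ :=
  1 - derivWithin h s t ^ 2 + h t * derivWithin (derivWithin h s) s t

section CurvatureDefect

variable {s : Set ℝ} {h : ℝ → ℝ} {a t : ℝ}

theorem curvatureDefect_of_mem_interior (ht : t ∈ interior s) :
    curvatureDefect s h t = 1 - deriv h t ^ 2 + h t * deriv (deriv h) t := by
  have hderiv : ∀ x ∈ interior s, ∀ f : ℝ → ℝ, derivWithin f s x = deriv f x := fun x hx _ ↦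
    derivWithin_of_mem_nhds (mem_interior_iff_mem_nhds.mp hx)
  have hderiv_near : derivWithin h s =ᶠ[𝓝 t] deriv h := by
    filter_upwards [isOpen_interior.mem_nhds ht] with x hx using hderiv x hx h
  rw [curvatureDefect, hderiv t ht, hderiv t ht, hderiv_near.deriv_eq]

theorem continuousOn_curvatureDefect (hs : UniqueDiffOn ℝ s) (hh : ContDiffOn ℝ 2 h s) :
    ContinuousOn (curvatureDefect s h) s := by
  have hh' : ContDiffOn ℝ 1 (derivWithin h s) s := hh.derivWithin hs (by norm_num)
  have hh'' : ContinuousOn (derivWithin (derivWithin h s) s) s :=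
    hh'.continuousOn_derivWithin hs le_rfl
  exact (continuousOn_const.sub (hh'.continuousOn.pow 2)).add (hh.continuousOn.mul hh'')

theorem hasDerivAt_sq_mul_curvatureDefect (hh : ContDiffOn ℝ 3 h s) (ht : t ∈ interior s) :
    HasDerivAt (fun x ↦ h x ^ 2 * curvatureDefect s h x)
      (h t * (h t ^ 2 * deriv (deriv (deriv h)) t
        + deriv h t * (2 + h t * deriv (deriv h) t) - 2 * deriv h t ^ 3)) t := by
  have hnhds : interior s ∈ 𝓝 t := isOpen_interior.mem_nhds ht
  have hh₀ : ContDiffOn ℝ 3 h (interior s) := hh.mono interior_subset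
  have hh₁ : ContDiffOn ℝ 2 (deriv h) (interior s) :=
    hh₀.deriv_of_isOpen isOpen_interior (by norm_num)
  have hh₂ : ContDiffOn ℝ 1 (deriv (deriv h)) (interior s) :=
    hh₁.deriv_of_isOpen isOpen_interior (by norm_num)
  refine (hasDerivAt_sq_mul_one_sub_sq_add_mul
    ((hh₀.differentiableOn (by norm_num)).hasDerivAt hnhds)
    ((hh₁.differentiableOn (by norm_num)).hasDerivAt hnhds)
    ((hh₂.differentiableOn (by norm_num)).hasDerivAt hnhds)).congr_of_eventuallyEq ?_
  filter_upwards [hnhds] with x hx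
  rw [curvatureDefect_of_mem_interior hx]

theorem sq_mul_curvatureDefect_eq_zero (hs : Convex ℝ s) (hs' : UniqueDiffOn ℝ s)
    (hh : ContDiffOn ℝ 3 h s) (ha : a ∈ s) (ha₀ : h a = 0)
    (hode : ∀ x ∈ interior s, h x ^ 2 * deriv (deriv (deriv h)) x
      + deriv h x * (2 + h x * deriv (deriv h) x) - 2 * deriv h x ^ 3 = 0)
    (ht : t ∈ s) : h t ^ 2 * curvatureDefect s h t = 0 := by
  have hcont : ContinuousOn (fun x ↦ h x ^ 2 * curvatureDefect s h x) s :=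
    (hh.continuousOn.pow 2).mul (continuousOn_curvatureDefect hs' (hh.of_le (by norm_num)))
  have hderiv : ∀ x ∈ interior s,
      HasDerivAt (fun x ↦ h x ^ 2 * curvatureDefect s h x) 0 x := fun x hx ↦ by
    simpa only [hode x hx, mul_zero] using hasDerivAt_sq_mul_curvatureDefect hh hx
  calc h t ^ 2 * curvatureDefect s h t
      = h a ^ 2 * curvatureDefect s h a := eq_of_deriv_eq_zero_on_interior hs hcont hderiv ht ha
    _ = 0 := by simp [ha₀]

theorem curvatureDefect_eq_zero_or_one_of_eq_zero (ht : t ∈ interior s) (ht₀ : h t = 0)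
    (hode : h t ^ 2 * deriv (deriv (deriv h)) t
      + deriv h t * (2 + h t * deriv (deriv h) t) - 2 * deriv h t ^ 3 = 0) :
    curvatureDefect s h t = 0 ∨ curvatureDefect s h t = 1 := by
  have hprod : deriv h t * (1 - deriv h t ^ 2) = 0 := by
    rw [ht₀] at hode
    linear_combination hode / 2
  rw [curvatureDefect_of_mem_interior ht, ht₀, zero_mul, add_zero]
  rcases mul_eq_zero.mp hprod with hzero | hone
  · exact .inr (by simp [hzero])
  · exact .inl hone

end CurvatureDefect

theorem statement4_general {s : Set ℝ} (hs : Convex ℝ s) {h : ℝ → ℝ} (hh : ContDiffOn ℝ 3 h s)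
    {a : ℝ} (ha : a ∈ s) (ha₀ : h a = 0) (ha₁ : derivWithin h s a = 1)
    (hode : ∀ t ∈ interior s, h t ^ 2 * deriv (deriv (deriv h)) t
      + deriv h t * (2 + h t * deriv (deriv h) t) - 2 * deriv h t ^ 3 = 0) :
    ∀ t ∈ interior s, 1 - deriv h t ^ 2 + h t * deriv (deriv h) t = 0 := by
  intro t ht
  have hdiff : UniqueDiffOn ℝ s := uniqueDiffOn_convex hs ⟨t, ht⟩
  have hdefect_a : curvatureDefect s h a = 0 := by simp [curvatureDefect, ha₀, ha₁]
  have hsub : insert a (interior s) ⊆ s := insert_subset ha interior_subset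
  have hconn : IsPreconnected (insert a (interior s)) := by
    refine hs.interior.isPreconnected.subset_closure (subset_insert a _) ?_
    rw [hs.closure_interior_eq_closure_of_nonempty_interior ⟨t, ht⟩]
    exact hsub.trans subset_closure
  have hvalues : MapsTo (curvatureDefect s h) (insert a (interior s)) {0, 1} := by
    rintro x (rfl | hx)
    · exact .inl hdefect_a
    · rcases mul_eq_zero.mp (sq_mul_curvatureDefect_eq_zero hs hdiff hh ha ha₀ hode
        (interior_subset hx)) with hx₀ | hx₀
      · exact curvatureDefect_eq_zero_or_one_of_eq_zero hx (pow_eq_zero_iff two_ne_zero |>.mp hx₀)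
          (hode x hx)
      · exact .inl hx₀
  have hcont := (continuousOn_curvatureDefect hdiff (hh.of_le (by norm_num))).mono hsub
  rw [← curvatureDefect_of_mem_interior ht, ← hdefect_a]
  exact hconn.constant_of_mapsTo (toFinite _).isDiscrete hcont hvalues
    (mem_insert_of_mem a ht) (mem_insert a _)

/-- If `h : [0,∞) → ℝ` is smooth with `h(0) = 0`, `h'(0) = 1`, `h > 0` on `(0,∞)` and
satisfies `h² h''' + h'(2 + h h'') − 2 h'³ = 0` on `(0,∞)`, then
`1 − h'² + h h'' = 0` on `(0,∞)`. -/
theorem statement4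
    (h : ℝ → ℝ) (hsm : ContDiffOn ℝ (⊤ : ℕ∞) h (Set.Ici 0))
    (h0 : h 0 = 0) (h1 : derivWithin h (Set.Ici 0) 0 = 1)
    (hpos : ∀ t > (0:ℝ), 0 < h t)
    (hode : ∀ t > (0:ℝ),
      (h t)^2 * deriv (deriv (deriv h)) t
        + deriv h t * (2 + h t * deriv (deriv h) t) - 2 * (deriv h t)^3 = 0) :
    ∀ t > (0:ℝ), 1 - (deriv h t)^2 + h t * deriv (deriv h) t = 0 := by
  have hgeneral := statement4_general (convex_Ici 0) (contDiffOn_infty.mp hsm 3) self_mem_Ici h0 h1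
  rw [interior_Ici] at hgeneral
  exact hgeneral hode
end

section
/- Let h : ℝ → ℝ be a smooth function satisfying h(t)² h'''(t) + h'(t)(2 + h(t) h''(t)) − 2 h'(t)³ = 0 for all t, and let α : (0, ∞) → ℝ be a smooth function satisfying the conformality equation α'(r) = h(α(r))/r for all r > 0. Then α satisfies, for all r > 0, the fourth-order equation: 3 h(α) ( −2 r α' h''(α) − r² (α')² h'''(α) − 2 r² α'' h''(α) + 3 h'(α)³ ) + r ( 3 r α'' − 3 α' − 6 r α'' h'(α)² − 9 r (α')² h'(α) h''(α) − 6 α' h'(α)² + 6 r² α''' + r⁴⁽ᵗʰ⁾: r³ α'''' ) + 9 h(α)² h'(α) h''(α) = 0, i.e. 3h(α)(−2rα'h''(α) − r²(α')²h'''(α) − 2r²α''h''(α) + 3h'(α)³) + 3r²α'' − 3rα' − 6r²α''h'(α)² − 9r²(α')²h'(α)h''(α) − 6rα'h'(α)² + 6r³α''' + r⁴α'''' + 9h(α)²h'(α)h''(α) = 0. -/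
/-!
Conformality says that `α` solves the Euler-type equation `r α' = h(α)`, so differentiating
`g(α) / r ^ k` gives `(h g' - k g)(α) / r ^ (k + 1)`. Hence each `r ^ k α⁽ᵏ⁾` is a universal
polynomial in `h, h', h'', …` evaluated at `α`. Substituting these for `k ≤ 4` turns the
left-hand side of the biharmonicity equation into `-2 h(α)` times the left-hand side of the
equation for `h`.
-/

section

variable {𝕜 : Type*} [NontriviallyNormedField 𝕜] {h α : 𝕜 → 𝕜} {s : Set 𝕜} {x : 𝕜}

theorem hasDerivAt_comp_div_pow_of_conformal {g : 𝕜 → 𝕜} (k : ℕ)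
    (hg : DifferentiableAt 𝕜 g (α x)) (hα : HasDerivAt α (h (α x) / x) x) (hx : x ≠ 0) :
    HasDerivAt (fun y ↦ g (α y) / y ^ k)
      ((h (α x) * deriv g (α x) - k * g (α x)) / x ^ (k + 1)) x := by
  have hpow : (k : 𝕜) * x ^ (k - 1) = k * x ^ k / x := by
    cases k with
    | zero => simp
    | succ k => rw [Nat.add_sub_cancel, pow_succ, ← mul_assoc, mul_div_cancel_right₀ _ hx]
  refine ((hg.hasDerivAt.comp x hα).div (hasDerivAt_pow k x) (pow_ne_zero k hx)).congr_deriv ?_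
  rw [hpow, Function.comp_apply]
  field_simp
  ring

/-- The functions `Gₖ` for which every solution `α` of the conformality equation
`α'(r) = h(α(r)) / r` satisfies `α⁽ᵏ⁾(r) = Gₖ(α(r)) / r ^ k`. -/
noncomputable def conformalCoeff (h : 𝕜 → 𝕜) : ℕ → 𝕜 → 𝕜
  | 0 => id
  | k + 1 => fun t ↦ h t * deriv (conformalCoeff h k) t - k * conformalCoeff h k t

theorem conformalCoeff_succ_apply (h : 𝕜 → 𝕜) (k : ℕ) (t : 𝕜) :
    conformalCoeff h (k + 1) t =
      h t * deriv (conformalCoeff h k) t - k * conformalCoeff h k t :=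
  rfl

theorem conformalCoeff_one (h : 𝕜 → 𝕜) : conformalCoeff h 1 = h := by
  funext t
  simp [conformalCoeff]

theorem contDiff_conformalCoeff_succ {n : WithTop ℕ∞} {k : ℕ} (hh : ContDiff 𝕜 (n + k) h) :
    ContDiff 𝕜 n (conformalCoeff h (k + 1)) := by
  induction k generalizing n with
  | zero => simpa [conformalCoeff_one] using hh
  | succ k ih =>
    have hcoeff : ContDiff 𝕜 (n + 1) (conformalCoeff h (k + 1)) :=
      ih (by simpa [add_assoc, add_comm, add_left_comm] using hh)
    exact ((hh.of_le le_self_add).mul hcoeff.deriv').sub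
      (contDiff_const.mul (hcoeff.of_le le_self_add))

theorem iterate_deriv_eqOn_conformalCoeff_div_pow (hs : IsOpen s) (h0 : (0 : 𝕜) ∉ s)
    (hα : ∀ x ∈ s, HasDerivAt α (h (α x) / x) x) {k : ℕ} (hh : ContDiff 𝕜 k h) :
    s.EqOn (deriv^[k + 1] α) fun x ↦ conformalCoeff h (k + 1) (α x) / x ^ (k + 1) := by
  induction k with
  | zero =>
    intro x hx
    simpa [conformalCoeff_one] using (hα x hx).deriv
  | succ k ih =>
    intro x hx
    have hcoeff : ContDiff 𝕜 1 (conformalCoeff h (k + 1)) :=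
      contDiff_conformalCoeff_succ (by simpa [add_comm] using hh)
    have hprev := ih (hh.of_le (by exact_mod_cast k.le_succ))
    rw [Function.iterate_succ_apply', hprev.deriv hs hx]
    exact (hasDerivAt_comp_div_pow_of_conformal (k + 1) (hcoeff.differentiable one_ne_zero _)
      (hα x hx) (ne_of_mem_of_not_mem hx h0)).deriv

theorem conformalCoeff_two (h : 𝕜 → 𝕜) :
    conformalCoeff h 2 = fun t ↦ h t * deriv h t - h t := by
  funext t
  rw [conformalCoeff_succ_apply, conformalCoeff_one, Nat.cast_one, one_mul]

theorem conformalCoeff_three (hh : ContDiff 𝕜 2 h) :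
    conformalCoeff h 3 = fun t ↦ h t * deriv h t ^ 2 + h t ^ 2 * deriv (deriv h) t
      - 3 * (h t * deriv h t) + 2 * h t := by
  funext t
  have h₀ : HasDerivAt h (deriv h t) t := (hh.differentiable two_ne_zero t).hasDerivAt
  have h₁ : HasDerivAt (deriv h) (deriv (deriv h) t) t :=
    (hh.differentiable_deriv_two t).hasDerivAt
  rw [conformalCoeff_succ_apply, conformalCoeff_two, ((h₀.fun_mul h₁).fun_sub h₀).deriv]
  push_cast
  ring

theorem conformalCoeff_four (hh : ContDiff 𝕜 3 h) :
    conformalCoeff h 4 = fun t ↦ h t * deriv h t ^ 3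
      + 4 * h t ^ 2 * deriv h t * deriv (deriv h) t + h t ^ 3 * deriv (deriv (deriv h)) t
      - 6 * (h t * deriv h t ^ 2 + h t ^ 2 * deriv (deriv h) t)
      + 11 * (h t * deriv h t) - 6 * h t := by
  funext t
  have hh₁ : ContDiff 𝕜 2 (deriv h) := ContDiff.deriv' (n := 2) (hh.of_le (by norm_num))
  have h₀ : HasDerivAt h (deriv h t) t := (hh.differentiable three_ne_zero t).hasDerivAt
  have h₁ : HasDerivAt (deriv h) (deriv (deriv h) t) t :=
    (hh₁.differentiable two_ne_zero t).hasDerivAt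
  have h₂ : HasDerivAt (deriv (deriv h)) (deriv (deriv (deriv h)) t) t :=
    (hh₁.differentiable_deriv_two t).hasDerivAt
  have hcoeff := ((((h₀.fun_mul (h₁.fun_pow 2)).fun_add ((h₀.fun_pow 2).fun_mul h₂)).fun_sub
    ((h₀.fun_mul h₁).const_mul 3)).fun_add (h₀.const_mul 2)).deriv
  rw [conformalCoeff_succ_apply, conformalCoeff_three (hh.of_le (by norm_num)), hcoeff]
  push_cast
  ring

/-- The left-hand side of the equation characterizing the warping functions `h` of
four-dimensional models for which every rotationally symmetric conformal diffeomorphism from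
`ℝ⁴` is biharmonic. -/
noncomputable def warpingOperator (h : 𝕜 → 𝕜) (t : 𝕜) : 𝕜 :=
  h t ^ 2 * deriv (deriv (deriv h)) t + deriv h t * (2 + h t * deriv (deriv h) t)
    - 2 * deriv h t ^ 3

/-- The left-hand side of the biharmonicity equation of the rotationally symmetric map
`(θ, r) ↦ (θ, α r)` from `ℝ⁴` to the model with warping function `h`, scaled so that
its leading term is `r⁴ α⁗(r)`. -/
noncomputable def biharmonicOperator (h α : 𝕜 → 𝕜) (r : 𝕜) : 𝕜 :=
  3 * h (α r) * (-2 * r * deriv α r * deriv (deriv h) (α r)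
      - r ^ 2 * (deriv α r) ^ 2 * deriv (deriv (deriv h)) (α r)
      - 2 * r ^ 2 * deriv (deriv α) r * deriv (deriv h) (α r)
      + 3 * (deriv h (α r)) ^ 3)
    + 3 * r ^ 2 * deriv (deriv α) r - 3 * r * deriv α r
    - 6 * r ^ 2 * deriv (deriv α) r * (deriv h (α r)) ^ 2
    - 9 * r ^ 2 * (deriv α r) ^ 2 * deriv h (α r) * deriv (deriv h) (α r)
    - 6 * r * deriv α r * (deriv h (α r)) ^ 2
    + 6 * r ^ 3 * deriv (deriv (deriv α)) r
    + r ^ 4 * deriv (deriv (deriv (deriv α))) r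
    + 9 * (h (α r)) ^ 2 * deriv h (α r) * deriv (deriv h) (α r)

theorem biharmonicOperator_of_conformal (hs : IsOpen s) (h0 : (0 : 𝕜) ∉ s)
    (hα : ∀ x ∈ s, HasDerivAt α (h (α x) / x) x) (hh : ContDiff 𝕜 3 h) (hx : x ∈ s) :
    biharmonicOperator h α x = -2 * h (α x) * warpingOperator h (α x) := by
  have hx0 : x ≠ 0 := ne_of_mem_of_not_mem hx h0
  have hα₁ : deriv α x = h (α x) / x := (hα x hx).deriv
  have hα₂ : deriv (deriv α) x = conformalCoeff h 2 (α x) / x ^ 2 :=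
    iterate_deriv_eqOn_conformalCoeff_div_pow hs h0 hα (k := 1) (hh.of_le (by norm_num)) hx
  have hα₃ : deriv (deriv (deriv α)) x = conformalCoeff h 3 (α x) / x ^ 3 :=
    iterate_deriv_eqOn_conformalCoeff_div_pow hs h0 hα (k := 2) (hh.of_le (by norm_num)) hx
  have hα₄ : deriv (deriv (deriv (deriv α))) x = conformalCoeff h 4 (α x) / x ^ 4 :=
    iterate_deriv_eqOn_conformalCoeff_div_pow hs h0 hα (k := 3) hh hx
  rw [biharmonicOperator, warpingOperator, hα₁, hα₂, hα₃, hα₄, conformalCoeff_two,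
    conformalCoeff_three (hh.of_le (by norm_num)), conformalCoeff_four hh]
  field_simp
  ring

theorem statement9_general (hs : IsOpen s) (h0 : (0 : 𝕜) ∉ s) (hh : ContDiff 𝕜 3 h)
    (hα : DifferentiableOn 𝕜 α s) (hconf : ∀ r ∈ s, deriv α r = h (α r) / r)
    (hode : ∀ r ∈ s, warpingOperator h (α r) = 0) :
    ∀ r ∈ s, biharmonicOperator h α r = 0 := by
  have hα' : ∀ r ∈ s, HasDerivAt α (h (α r) / r) r := fun r hr ↦
    hconf r hr ▸ hα.hasDerivAt (hs.mem_nhds hr)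
  intro r hr
  rw [biharmonicOperator_of_conformal hs h0 hα' hh hr, hode r hr, mul_zero]

end

/-- If the warping function `h` satisfies `h² h''' + h'(2 + h h'') − 2 h'³ = 0` and
`α` satisfies the conformality equation `α'(r) = h(α(r))/r` on `(0,∞)`, then `α`
satisfies the fourth-order biharmonicity equation of rotationally symmetric maps
from `ℝ⁴` to the model with warping function `h`. -/
theorem statement9 (h : ℝ → ℝ) (hh : ContDiff ℝ (⊤ : ℕ∞) h)
    (hode : ∀ t : ℝ,
      (h t)^2 * deriv (deriv (deriv h)) t
        + deriv h t * (2 + h t * deriv (deriv h) t) - 2 * (deriv h t)^3 = 0)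
    (α : ℝ → ℝ) (hα : ContDiffOn ℝ (⊤ : ℕ∞) α (Set.Ioi 0))
    (hconf : ∀ r > (0:ℝ), deriv α r = h (α r) / r) :
    ∀ r > (0:ℝ),
      3 * h (α r) * (-2 * r * deriv α r * deriv (deriv h) (α r)
          - r^2 * (deriv α r)^2 * deriv (deriv (deriv h)) (α r)
          - 2 * r^2 * deriv (deriv α) r * deriv (deriv h) (α r)
          + 3 * (deriv h (α r))^3)
        + 3 * r^2 * deriv (deriv α) r - 3 * r * deriv α r
        - 6 * r^2 * deriv (deriv α) r * (deriv h (α r))^2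
        - 9 * r^2 * (deriv α r)^2 * deriv h (α r) * deriv (deriv h) (α r)
        - 6 * r * deriv α r * (deriv h (α r))^2
        + 6 * r^3 * deriv (deriv (deriv α)) r
        + r^4 * deriv (deriv (deriv (deriv α))) r
        + 9 * (h (α r))^2 * deriv h (α r) * deriv (deriv h) (α r) = 0 := by
  exact statement9_general isOpen_Ioi Set.self_notMem_Ioi (contDiff_infty.1 hh 3)
    (hα.differentiableOn (by simp)) hconf fun r _ ↦ hode (α r)
end

section
/- Let c > 0 and let α : (0, ∞) → ℝ be given by α(r) = 2 arctan(c² r), and set h(t) = sin t. Then for all r > 0: 3 sin(α)(−2rα'h''(α) − r²(α')²h'''(α) − 2r²α''h''(α) + 3cos(α)³) + 3r²α'' − 3rα' − 6r²α''cos(α)² − 9r²(α')²cos(α)h''(α) − 6rα'cos(α)² + 6r³α''' + r⁴α'''' + 9sin(α)²cos(α)h''(α) = 0, where h''(α) = −sin(α) and h'''(α) = −cos(α). -/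
/-! The map `(θ, r) ↦ (θ, α r)` is conformal when `r α' = sin α`. For such a profile the Euler
operator `r d/dr` acts on functions of `α` as the vector field `sin α d/dα`, and
`r ^ (n + 1) α⁽ⁿ⁺¹⁾ = (r d/dr - n) (r ^ n α⁽ⁿ⁾)`. Hence every `r ^ n α⁽ⁿ⁾` is a polynomial in
`sin α` and `cos α`, and the biharmonicity equation reduces to
`9 sin α cos α (sin² α + cos² α - 1) = 0`. -/

open scoped Topology

theorem pow_succ_mul_deriv_of_eventually_pow_mul_eq {𝕜 : Type*} [NontriviallyNormedField 𝕜]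
    {F g : 𝕜 → 𝕜} {F' x : 𝕜} {n : ℕ} (hx : x ≠ 0) (hF : HasDerivAt F F' x)
    (hg : ∀ᶠ y in 𝓝 x, y ^ n * g y = F y) :
    x ^ (n + 1) * deriv g x = x * F' - n * F x := by
  have hg_eq : g =ᶠ[𝓝 x] fun y ↦ F y / y ^ n := by
    filter_upwards [hg, eventually_ne_nhds hx] with y hy hy0
    rw [← hy, mul_div_cancel_left₀ _ (pow_ne_zero n hy0)]
  rw [hg_eq.deriv_eq, (hF.fun_div (hasDerivAt_pow n x) (pow_ne_zero n hx)).deriv]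
  cases n with
  | zero => simp
  | succ k =>
    rw [Nat.add_sub_cancel]
    field_simp
    ring

/-- On `U`, the profile `α` solves `x α' = h(α)`, the condition for the rotationally symmetric map
`(θ, x) ↦ (θ, α x)` from Euclidean space to the warped product with warping function `h` to be
conformal. The equation is not divided by `x`, so that it stays meaningful at the origin. -/
def IsConformalProfileOn (h α : ℝ → ℝ) (U : Set ℝ) : Prop :=
  ∀ x ∈ U, DifferentiableAt ℝ α x ∧ x * deriv α x = h (α x)

namespace IsConformalProfileOn

variable {α : ℝ → ℝ} {U : Set ℝ} {x : ℝ}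

theorem pow_succ_mul_deriv {h P g : ℝ → ℝ} {P' : ℝ} {n : ℕ} (hα : IsConformalProfileOn h α U)
    (hU : IsOpen U) (hx : x ∈ U) (hx0 : x ≠ 0) (hP : HasDerivAt P P' (α x))
    (hg : ∀ y ∈ U, y ≠ 0 → y ^ n * g y = P (α y)) :
    x ^ (n + 1) * deriv g x = P' * h (α x) - n * P (α x) := by
  have hg_near : ∀ᶠ y in 𝓝 x, y ^ n * g y = P (α y) := by
    filter_upwards [hU.mem_nhds hx, eventually_ne_nhds hx0] using hg
  obtain ⟨hdiff, hconf⟩ := hα x hx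
  rw [pow_succ_mul_deriv_of_eventually_pow_mul_eq hx0 (hP.comp x hdiff.hasDerivAt) hg_near,
    ← hconf, Function.comp_apply]
  ring

theorem sq_mul_deriv_deriv (hα : IsConformalProfileOn Real.sin α U) (hU : IsOpen U)
    (hx : x ∈ U) (hx0 : x ≠ 0) :
    x ^ 2 * deriv (deriv α) x = Real.sin (α x) * (Real.cos (α x) - 1) := by
  have hfirst : ∀ y ∈ U, y ≠ 0 → y ^ 1 * deriv α y = Real.sin (α y) := fun y hy _ ↦ by
    rw [pow_one, (hα y hy).2]
  rw [hα.pow_succ_mul_deriv hU hx hx0 (Real.hasDerivAt_sin _) hfirst]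
  push_cast
  ring

theorem cube_mul_deriv_deriv_deriv (hα : IsConformalProfileOn Real.sin α U) (hU : IsOpen U)
    (hx : x ∈ U) (hx0 : x ≠ 0) :
    x ^ 3 * deriv (deriv (deriv α)) x =
      Real.sin (α x) * (Real.cos (α x) - 1) * (2 * Real.cos (α x) - 1) := by
  have hP := (Real.hasDerivAt_sin (α x)).fun_mul ((Real.hasDerivAt_cos (α x)).sub_const 1)
  rw [hα.pow_succ_mul_deriv hU hx hx0 hP fun y hy hy0 ↦ hα.sq_mul_deriv_deriv hU hy hy0]
  push_cast
  linear_combination -Real.sin (α x) * Real.sin_sq_add_cos_sq (α x)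

theorem pow_four_mul_deriv_deriv_deriv_deriv (hα : IsConformalProfileOn Real.sin α U)
    (hU : IsOpen U) (hx : x ∈ U) (hx0 : x ≠ 0) :
    x ^ 4 * deriv (deriv (deriv (deriv α))) x =
      6 * Real.sin (α x) * Real.cos (α x) * (Real.cos (α x) - 1) ^ 2 := by
  have hcos := Real.hasDerivAt_cos (α x)
  have hP := ((Real.hasDerivAt_sin (α x)).fun_mul (hcos.sub_const 1)).fun_mul
    ((hcos.const_mul 2).sub_const 1)
  rw [hα.pow_succ_mul_deriv hU hx hx0 hP fun y hy hy0 ↦ hα.cube_mul_deriv_deriv_deriv hU hy hy0]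
  push_cast
  linear_combination
    Real.sin (α x) * (3 - 4 * Real.cos (α x)) * Real.sin_sq_add_cos_sq (α x)

end IsConformalProfileOn

theorem sin_two_mul_arctan (t : ℝ) : Real.sin (2 * Real.arctan t) = 2 * t / (1 + t ^ 2) := by
  rw [Real.sin_eq_two_mul_tan_half_div_one_add_tan_half_sq, mul_div_cancel_left₀ _ two_ne_zero,
    Real.tan_arctan]

theorem isConformalProfileOn_two_mul_arctan (a : ℝ) (U : Set ℝ) :
    IsConformalProfileOn Real.sin (fun x ↦ 2 * Real.arctan (a * x)) U := by
  intro x _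
  have hderiv := ((hasDerivAt_id' x).const_mul a).arctan.const_mul 2
  refine ⟨hderiv.differentiableAt, ?_⟩
  rw [hderiv.deriv, sin_two_mul_arctan]
  ring

/-- The left-hand side of the biharmonicity equation, cleared of denominators, of the rotationally
symmetric map `(θ, r) ↦ (θ, α r)` from `ℝ⁴` to `S⁴`. The factors `-sin (α r)` and `-cos (α r)` are
the values `h''(α r)` and `h'''(α r)` for the warping function `h = sin`. -/
noncomputable def radialBitension (α : ℝ → ℝ) (r : ℝ) : ℝ :=
  3 * Real.sin (α r) * (-2 * r * deriv α r * (-Real.sin (α r))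
      - r ^ 2 * (deriv α r) ^ 2 * (-Real.cos (α r))
      - 2 * r ^ 2 * deriv (deriv α) r * (-Real.sin (α r))
      + 3 * (Real.cos (α r)) ^ 3)
    + 3 * r ^ 2 * deriv (deriv α) r - 3 * r * deriv α r
    - 6 * r ^ 2 * deriv (deriv α) r * (Real.cos (α r)) ^ 2
    - 9 * r ^ 2 * (deriv α r) ^ 2 * Real.cos (α r) * (-Real.sin (α r))
    - 6 * r * deriv α r * (Real.cos (α r)) ^ 2
    + 6 * r ^ 3 * deriv (deriv (deriv α)) r
    + r ^ 4 * deriv (deriv (deriv (deriv α))) r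
    + 9 * (Real.sin (α r)) ^ 2 * Real.cos (α r) * (-Real.sin (α r))

theorem statement10_general {α : ℝ → ℝ} {U : Set ℝ} {r : ℝ}
    (hα : IsConformalProfileOn Real.sin α U) (hU : IsOpen U) (hr : r ∈ U) :
    radialBitension α r = 0 := by
  have hfirst := (hα r hr).2
  obtain rfl | hr0 := eq_or_ne r 0
  · have hsin : Real.sin (α 0) = 0 := by rw [← hfirst, zero_mul]
    simp [radialBitension, hsin]
  · have hsecond := hα.sq_mul_deriv_deriv hU hr hr0
    have hthird := hα.cube_mul_deriv_deriv_deriv hU hr hr0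
    have hfourth := hα.pow_four_mul_deriv_deriv_deriv_deriv hU hr hr0
    unfold radialBitension
    set s := Real.sin (α r)
    set c := Real.cos (α r)
    linear_combination
      (6 * s ^ 2 - 3 - 6 * c ^ 2 + 12 * s * c * (r * deriv α r + s)) * hfirst
        + (6 * s ^ 2 + 3 - 6 * c ^ 2) * hsecond + 6 * hthird + hfourth
        + 9 * s * c * Real.sin_sq_add_cos_sq (α r)

/-- The profile `α(r) = 2 arctan(c² r)` satisfies the fourth-order biharmonicity
equation of rotationally symmetric maps from `ℝ⁴` to `S⁴` (warping function
`h = sin`, so that `h''(α) = −sin α` and `h'''(α) = −cos α`). -/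
theorem statement10 (c : ℝ) (hc : 0 < c) (α : ℝ → ℝ)
    (hα : ∀ r, α r = 2 * Real.arctan (c^2 * r)) :
    ∀ r > (0:ℝ),
      3 * Real.sin (α r) * (-2 * r * deriv α r * (-Real.sin (α r))
          - r^2 * (deriv α r)^2 * (-Real.cos (α r))
          - 2 * r^2 * deriv (deriv α) r * (-Real.sin (α r))
          + 3 * (Real.cos (α r))^3)
        + 3 * r^2 * deriv (deriv α) r - 3 * r * deriv α r
        - 6 * r^2 * deriv (deriv α) r * (Real.cos (α r))^2
        - 9 * r^2 * (deriv α r)^2 * Real.cos (α r) * (-Real.sin (α r))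
        - 6 * r * deriv α r * (Real.cos (α r))^2
        + 6 * r^3 * deriv (deriv (deriv α)) r
        + r^4 * deriv (deriv (deriv (deriv α))) r
        + 9 * (Real.sin (α r))^2 * Real.cos (α r) * (-Real.sin (α r)) = 0 := by
  have hconf : IsConformalProfileOn Real.sin α Set.univ := by
    rw [funext hα]
    exact isConformalProfileOn_two_mul_arctan (c ^ 2) Set.univ
  exact fun r _ ↦ statement10_general hconf isOpen_univ (Set.mem_univ r)
end

section
/- Let α : [0, ∞) → ℝ be continuous with α(0) = 0, differentiable on (0, ∞), and suppose that α'(r) = sin(α(r))/r for all r > 0 and that sin(2α(r)) · sin⁴(α(r)/2) = 0 for all r > 0. Then α(r) = 0 for all r ≥ 0. -/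
/-!
Since `sin (x / 2) = 0` forces `sin (2 * x) = 0`, the biharmonicity condition says exactly that
`2 * α` takes values in the zero set `πℤ` of the sine. This set is discrete, so a continuous `α` is
constant on a connected domain.
-/

open Real Set

theorem sin_two_mul_eq_zero_of_sin_half_eq_zero {x : ℝ} (hx : sin (x / 2) = 0) :
    sin (2 * x) = 0 := by
  have hsin : sin x = 0 := by
    calc sin x = sin (2 * (x / 2)) := by rw [mul_div_cancel₀ x two_ne_zero]
      _ = 0 := by rw [sin_two_mul, hx, mul_zero, zero_mul]
  rw [sin_two_mul, hsin, mul_zero, zero_mul]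

theorem sin_two_mul_mul_sin_half_pow_eq_zero_iff {x : ℝ} {n : ℕ} :
    sin (2 * x) * sin (x / 2) ^ n = 0 ↔ sin (2 * x) = 0 := by
  rw [mul_eq_zero, or_iff_left_iff_imp]
  exact fun h => sin_two_mul_eq_zero_of_sin_half_eq_zero (eq_zero_of_pow_eq_zero h)

theorem eq_of_isPreconnected_of_sin_eq_zero {X : Type*} [TopologicalSpace X] {s : Set X}
    (hs : IsPreconnected s) {f : X → ℝ} (hf : ContinuousOn f s)
    (hsin : ∀ x ∈ s, sin (f x) = 0) {x y : X} (hx : x ∈ s) (hy : y ∈ s) : f x = f y := by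
  have hdiscrete : IsDiscrete (AddSubgroup.zmultiples π : Set ℝ) :=
    SetLike.isDiscrete_iff_discreteTopology.mpr inferInstance
  have hmaps : MapsTo f s (AddSubgroup.zmultiples π) := fun z hz => by
    simpa [AddSubgroup.mem_zmultiples_iff] using sin_eq_zero_iff.mp (hsin z hz)
  exact hs.constant_of_mapsTo hdiscrete hf hmaps hx hy

theorem statement12_general {X : Type*} [TopologicalSpace X] {s : Set X} (hs : IsPreconnected s)
    {α : X → ℝ} (hα : ContinuousOn α s) {n : ℕ}
    (heq : ∀ x ∈ s, sin (2 * α x) * sin (α x / 2) ^ n = 0) {x y : X} (hx : x ∈ s) (hy : y ∈ s) :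
    α x = α y := by
  have htwo : 2 * α x = 2 * α y :=
    eq_of_isPreconnected_of_sin_eq_zero hs (hα.const_mul 2)
      (fun z hz => sin_two_mul_mul_sin_half_pow_eq_zero_iff.mp (heq z hz)) hx hy
  exact mul_left_cancel₀ two_ne_zero htwo

/-- If `α` is continuous on `[0,∞)` with `α(0) = 0`, satisfies the conformality
equation `α'(r) = sin(α(r))/r` on `(0,∞)` and the condition
`sin(2α) sin⁴(α/2) = 0` on `(0,∞)`, then `α ≡ 0`. -/
theorem statement12 (α : ℝ → ℝ)
    (hcont : ContinuousOn α (Set.Ici 0)) (h0 : α 0 = 0)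
    (hder : ∀ r > (0:ℝ), HasDerivAt α (Real.sin (α r) / r) r)
    (heq : ∀ r > (0:ℝ), Real.sin (2 * α r) * (Real.sin (α r / 2))^4 = 0) :
    ∀ r ≥ (0:ℝ), α r = 0 := by
  intro r hr
  have heq_Ici : ∀ x ∈ Ici (0 : ℝ), sin (2 * α x) * sin (α x / 2) ^ 4 = 0 := fun x hx =>
    hx.eq_or_lt.elim (fun h => by simp [← h, h0]) (heq x)
  exact (statement12_general isPreconnected_Ici hcont heq_Ici hr self_mem_Ici).trans h0
end
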